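/- Every minimally 1-tough series-parallel graph is a cycle. -/

import Mathlib

open SimpleGraph

noncomputable def numComp {V : Type*} (G : SimpleGraph V) (S : Set V) : ℕ :=
  Nat.card (SimpleGraph.induce Sᶜ G).ConnectedComponent

def IsCutset {V : Type*} (G : SimpleGraph V) (S : Set V) : Prop := 1 < numComp G S

noncomputable def toughness {V : Type*} (G : SimpleGraph V) : ℝ :=
  sInf {r : ℝ | ∃ S : Set V, IsCutset G S ∧ r = (S.ncard : ℝ) / (numComp G S : ℝ)}

def IsToughSet {V : Type*} (G : SimpleGraph V) (S : Set V) : Prop :=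
  IsCutset G S ∧ (S.ncard : ℝ) = toughness G * (numComp G S : ℝ)

def MinTough {V : Type*} (G : SimpleGraph V) (t : ℝ) : Prop :=
  toughness G = t ∧ ∀ e ∈ G.edgeSet, toughness (G.deleteEdges {e}) < t

def IsCutVertex {V : Type*} (G : SimpleGraph V) (x : V) : Prop := IsCutset G {x}

inductive SPTree (V : Type*) where
  | edge (u v : V) : SPTree V
  | series (l r : SPTree V) : SPTree V
  | parallel (l r : SPTree V) : SPTree V

namespace SPTree

def src {V : Type*} : SPTree V → V
  | edge u _ => u
  | series l _ => l.src
  | parallel l _ => l.src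

def tgt {V : Type*} : SPTree V → V
  | edge _ v => v
  | series _ r => r.tgt
  | parallel l _ => l.tgt

def verts {V : Type*} : SPTree V → Set V
  | edge u v => {u, v}
  | series l r => l.verts ∪ r.verts
  | parallel l r => l.verts ∪ r.verts

def edges {V : Type*} : SPTree V → Set (Sym2 V)
  | edge u v => {s(u, v)}
  | series l r => l.edges ∪ r.edges
  | parallel l r => l.edges ∪ r.edges

def WF {V : Type*} : SPTree V → Prop
  | edge u v => u ≠ v
  | series l r => l.WF ∧ r.WF ∧ l.tgt = r.src ∧ l.verts ∩ r.verts = {l.tgt}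
  | parallel l r => l.WF ∧ r.WF ∧ l.src = r.src ∧ l.tgt = r.tgt ∧
      l.verts ∩ r.verts = {l.src, l.tgt} ∧ Disjoint l.edges r.edges

end SPTree

/-- `G` is the series-parallel graph given by the (well-formed, spanning) sp-tree `T`. -/
def RepresentsSP {V : Type*} (G : SimpleGraph V) (T : SPTree V) : Prop :=
  T.WF ∧ T.verts = Set.univ ∧ G = SimpleGraph.fromEdgeSet T.edges

def IsSPGraph {V : Type*} (G : SimpleGraph V) : Prop := ∃ T : SPTree V, RepresentsSP G T

/-!
Let `G` be `1`-tough and series-parallel. Deleting the two terminals of a subtree `T` of its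
sp-tree leaves at most two components, so at most two parallel factors of `T` are series joins,
and at most one if `G` has a vertex outside `T`. In the latter case the factors of `T` have
spanning paths that glue to a spanning path of `T`. The root of the sp-tree is a parallel join,
because the middle vertex of a series join would be a cut vertex, and spanning paths of its two
series factors close up to a Hamiltonian cycle. A Hamiltonian graph is `1`-tough unless it is
complete, so in a minimally `1`-tough graph every edge lies on that cycle.
-/

section Toughness

variable {V : Type*} {G : SimpleGraph V} {S : Set V}

theorem ncard_image_compl_le_numComp [Finite V] {ι : Type*} (f : V → ι)
    (hf : ∀ x ∉ S, ∀ y ∉ S, G.Adj x y → f x = f y) : (f '' Sᶜ).ncard ≤ numComp G S := by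
  have hwalk (x y : ↥Sᶜ) (p : (induce Sᶜ G).Walk x y) : f x = f y := by
    induction p with
    | nil => rfl
    | @cons x y _ hadj _ ih => exact (hf x x.2 y y.2 hadj).trans ih
  let g : (induce Sᶜ G).ConnectedComponent → ι :=
    ConnectedComponent.lift (fun x => f x) fun x y p _ => hwalk x y p
  have hrange : f '' Sᶜ ⊆ Set.range g := by
    rintro _ ⟨x, hx, rfl⟩
    exact ⟨connectedComponentMk _ ⟨x, hx⟩, rfl⟩
  calc (f '' Sᶜ).ncard ≤ (Set.range g).ncard := Set.ncard_le_ncard hrange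
    _ ≤ numComp G S := by
      rw [← Set.image_univ, numComp, ← Set.ncard_univ]
      exact Set.ncard_image_le

theorem exists_isCutset_iff [Finite V] : (∃ S, IsCutset G S) ↔ G ≠ ⊤ := by
  constructor
  · rintro ⟨S, hS⟩ rfl
    have hconn : (induce Sᶜ (⊤ : SimpleGraph V)).Preconnected := by
      rw [SimpleGraph.induce, comap_top (Function.Embedding.injective _)]
      exact preconnected_top
    exact hS.not_ge (Finite.card_le_one_iff_subsingleton.2 hconn.subsingleton_connectedComponent)
  · intro hG
    obtain ⟨u, v, huv, hadj⟩ := ne_top_iff_exists_not_adj.1 hG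
    refine ⟨{u, v}ᶜ, ?_⟩
    have hcard := ncard_image_compl_le_numComp (G := G) (S := {u, v}ᶜ) id (by
      simp only [Set.mem_compl_iff, not_not]
      rintro x (rfl | rfl) y (rfl | rfl) hxy
      exacts [rfl, absurd hxy hadj, absurd hxy.symm hadj, rfl])
    rwa [compl_compl, Set.image_id, Set.ncard_pair huv] at hcard

theorem one_le_toughness_iff [Finite V] :
    1 ≤ toughness G ↔ G ≠ ⊤ ∧ ∀ S, IsCutset G S → numComp G S ≤ S.ncard := by
  have hratio {S : Set V} (hS : IsCutset G S) :
      1 ≤ (S.ncard : ℝ) / numComp G S ↔ numComp G S ≤ S.ncard := by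
    rw [one_le_div (by exact_mod_cast Nat.zero_lt_of_lt hS), Nat.cast_le]
  rw [← exists_isCutset_iff]
  constructor
  · intro hG
    refine ⟨?_, fun S hS => (hratio hS).1 (hG.trans (csInf_le ⟨0, ?_⟩ ⟨S, hS, rfl⟩))⟩
    · -- Without a cutset, `toughness G` is the infimum of the empty set, which is `0` in `ℝ`.
      by_contra! hno
      norm_num [toughness, hno] at hG
    · rintro _ ⟨S', -, rfl⟩
      positivity
  · rintro ⟨⟨S₀, hS₀⟩, hle⟩
    refine le_csInf ⟨_, S₀, hS₀, rfl⟩ ?_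
    rintro _ ⟨S, hS, rfl⟩
    exact (hratio hS).2 (hle S hS)

theorem numComp_le_max_one_ncard [Finite V] (hG : 1 ≤ toughness G) (S : Set V) :
    numComp G S ≤ max 1 S.ncard := by
  by_cases hS : IsCutset G S
  · exact le_max_of_le_right ((one_le_toughness_iff.1 hG).2 S hS)
  · exact le_max_of_le_left (not_lt.1 hS)

end Toughness

section Hamiltonian

variable {V : Type*} {G : SimpleGraph V}

theorem exists_boundary_dart_of_mem_support {a x y : V} (c : G.Walk a a) (hx : x ∈ c.support)
    (hy : y ∈ c.support) {K : Set V} (hxK : x ∈ K) (hyK : y ∉ K) :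
    ∃ d ∈ c.darts, d.fst ∈ K ∧ d.snd ∉ K := by
  classical
  have hyx : y ∈ (c.rotate x hx).support := (c.mem_support_rotate_iff x hx).2 hy
  obtain ⟨d, hd, hdK⟩ := ((c.rotate x hx).takeUntil y hyx).exists_boundary_dart K hxK hyK
  exact ⟨d, (c.rotate_darts x hx).mem_iff.1 (Walk.darts_takeUntil_subset_darts _ hyx hd), hdK⟩

theorem injOn_dart_snd_of_isCycle {a : V} {c : G.Walk a a} (hc : c.IsCycle) :
    Set.InjOn (fun d : G.Dart => d.snd) {d | d ∈ c.darts} := fun _ hd _ hd' =>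
  List.inj_on_of_nodup_map (c.map_snd_darts ▸ hc.support_nodup) hd hd'

variable [DecidableEq V]

/-- Distinct components of `G - S` are left by the cycle through distinct vertices of `S`. -/
theorem numComp_le_ncard_of_isHamiltonianCycle {a : V} {c : G.Walk a a}
    (hc : c.IsHamiltonianCycle) {S : Set V} (hS : IsCutset G S) : numComp G S ≤ S.ncard := by
  have := hc.finite
  have := Finite.one_lt_card_iff_nontrivial.1 hS
  have hexit (C : (induce Sᶜ G).ConnectedComponent) : ∃ d ∈ c.darts, d.snd ∈ S ∧
      ∃ h : d.fst ∉ S, (induce Sᶜ G).connectedComponentMk ⟨d.fst, h⟩ = C := by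
    obtain ⟨D, hD⟩ := exists_ne C
    obtain ⟨x, hx⟩ := C.nonempty_supp
    obtain ⟨y, hy⟩ := D.nonempty_supp
    have hyC : (y : V) ∉ Subtype.val '' C.supp := by
      rintro ⟨z, hz, hzy⟩
      exact hD (hy.symm.trans (Subtype.ext hzy ▸ hz))
    obtain ⟨d, hd, ⟨u, hu, hud⟩, hsnd⟩ := exists_boundary_dart_of_mem_support c
      (hc.mem_support x) (hc.mem_support y) (Set.mem_image_of_mem _ hx) hyC
    have hfst : d.fst ∉ S := hud ▸ u.2
    have hdC : (induce Sᶜ G).connectedComponentMk ⟨d.fst, hfst⟩ = C :=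
      (congrArg _ (Subtype.ext hud.symm)).trans hu
    refine ⟨d, hd, ?_, hfst, hdC⟩
    by_contra hdS
    refine hsnd ⟨⟨d.snd, hdS⟩, Eq.trans (ConnectedComponent.sound ?_) hdC, rfl⟩
    exact Adj.reachable (G := induce Sᶜ G) d.adj.symm
  choose d hd hdS hfst hdC using hexit
  refine Nat.card_le_card_of_injective (fun C => (⟨(d C).snd, hdS C⟩ : S)) fun C D hCD => ?_
  have hdart : d C = d D :=
    injOn_dart_snd_of_isCycle hc.isCycle (hd C) (hd D) (Subtype.ext_iff.1 hCD)
  rw [← hdC C, ← hdC D]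
  simp only [hdart]

variable [Fintype V]

theorem one_le_toughness_of_isHamiltonian (hG : G.IsHamiltonian) (hne : G ≠ ⊤) :
    1 ≤ toughness G := by
  obtain ⟨u, v, huv, -⟩ := ne_top_iff_exists_not_adj.1 hne
  obtain ⟨a, c, hc⟩ := hG (Fintype.one_lt_card_iff.2 ⟨u, v, huv⟩).ne'
  exact one_le_toughness_iff.2 ⟨hne, fun _ hS => numComp_le_ncard_of_isHamiltonianCycle hc hS⟩

theorem MinTough.eq_of_le_of_isHamiltonian {H : SimpleGraph V} (hG : MinTough G 1) (hle : H ≤ G)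
    (hH : H.IsHamiltonian) : H = G := by
  by_contra hne
  obtain ⟨e, heG, heH⟩ := Set.exists_of_ssubset (edgeSet_ssubset_edgeSet.2 (hle.lt_of_ne hne))
  have hHe : H ≤ G.deleteEdges {e} := by
    rw [← edgeSet_subset_edgeSet, edgeSet_deleteEdges]
    exact Set.subset_sdiff_singleton (edgeSet_subset_edgeSet.2 hle) heH
  refine (hG.2 e heG).not_ge (one_le_toughness_of_isHamiltonian (hH.mono hHe) ?_)
  intro htop
  have : G.deleteEdges {e} = G := le_antisymm (deleteEdges_le _) (htop ▸ le_top)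
  rw [deleteEdges_eq_self, Set.disjoint_singleton_right] at this
  exact this heG

theorem isHamiltonian_of_iso_cycleGraph {n : ℕ} (hn : 3 ≤ n) (φ : cycleGraph n ≃g G) :
    G.IsHamiltonian := by
  obtain ⟨m, rfl⟩ := Nat.exists_eq_add_of_le' hn
  have hcycle : (cycleGraph.cycle m).IsHamiltonianCycle :=
    Walk.isHamiltonianCycle_iff_isCycle_and_length_eq.2 ⟨cycleGraph.isCycle_cycle, by simp⟩
  exact fun _ => ⟨_, _, hcycle.map (f := φ.toHom) φ.bijective⟩

theorem exists_le_iso_cycleGraph_of_isHamiltonianCycle {a : V} {c : G.Walk a a}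
    (hc : c.IsHamiltonianCycle) :
    ∃ H ≤ G, Nonempty (cycleGraph (Fintype.card V) ≃g H) := by
  have hcard : 3 ≤ Fintype.card V := hc.length_eq ▸ hc.isCycle.three_le_length
  obtain ⟨f⟩ := (cycleGraph_isContained_iff hcard).2 ⟨a, c, hc.isCycle, hc.length_eq⟩
  have hf : Function.Bijective f :=
    (Fintype.bijective_iff_injective_and_card f).2 ⟨f.injective, Fintype.card_fin _⟩
  exact ⟨_, (map_le_iff_le_comap f.toEmbedding _ _).2 fun _ _ => f.toHom.map_adj,
    ⟨Iso.map (Equiv.ofBijective f hf) (cycleGraph _)⟩⟩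

theorem MinTough.exists_iso_cycleGraph (hG : MinTough G 1) (hham : G.IsHamiltonian) :
    ∃ n : ℕ, 3 ≤ n ∧ Nonempty (G ≃g cycleGraph n) := by
  obtain ⟨u, v, huv, -⟩ := ne_top_iff_exists_not_adj.1 (one_le_toughness_iff.1 hG.1.ge).1
  obtain ⟨a, c, hc⟩ := hham (Fintype.one_lt_card_iff.2 ⟨u, v, huv⟩).ne'
  have hcard : 3 ≤ Fintype.card V := hc.length_eq ▸ hc.isCycle.three_le_length
  obtain ⟨H, hle, ⟨φ⟩⟩ := exists_le_iso_cycleGraph_of_isHamiltonianCycle hc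
  obtain rfl := hG.eq_of_le_of_isHamiltonian hle (isHamiltonian_of_iso_cycleGraph hcard φ)
  exact ⟨_, hcard, ⟨φ.symm⟩⟩

end Hamiltonian

section Walks

variable {V : Type*} {G : SimpleGraph V} {u v w : V}

theorem isPath_append {p : G.Walk u v} {q : G.Walk v w} (hp : p.IsPath) (hq : q.IsPath)
    (h : ∀ x ∈ p.support, x ∈ q.support → x = v) : (p.append q).IsPath := by
  have hq' := hq.support_nodup
  rw [← q.cons_tail_support, List.nodup_cons] at hq'
  refine Walk.IsPath.mk' (p.support_append q ▸ List.nodup_append'.2 ⟨hp.support_nodup, hq'.2, ?_⟩)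
  intro x hxp hxq
  exact hq'.1 (h x hxp (List.mem_of_mem_tail hxq) ▸ hxq)

theorem isCycle_append_reverse {p q : G.Walk u v} (hp : p.IsPath) (hq : q.IsPath) (hpq : p ≠ q)
    (h : ∀ x ∈ p.support, x ∈ q.support → x = u ∨ x = v) : (p.append q.reverse).IsCycle := by
  refine hp.isCycle_append hq.reverse (fun x hxp hxq => ?_) ?_
  · have hu := hp.support_nodup
    have hv := hq.reverse.support_nodup
    rw [← Walk.cons_tail_support, List.nodup_cons] at hu hv
    have hxq' : x ∈ q.support := by
      simpa only [Walk.support_reverse, List.mem_reverse] using List.mem_of_mem_tail hxq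
    rcases h x (List.mem_of_mem_tail hxp) hxq' with rfl | rfl
    exacts [hu.1 hxp, hv.1 hxq]
  · by_contra! hlen
    rw [Walk.length_reverse] at hlen
    exact hpq (Walk.eq_of_length_le_one hlen.1 hlen.2)

end Walks

namespace SPTree

variable {V : Type*} {G : SimpleGraph V} {T l r : SPTree V} {x y : V}

section Basic

/-- The series-parallel graph built by the sp-tree `T`, on the ambient vertex type: vertices outside
`T.verts` are isolated. -/
def graph (T : SPTree V) : SimpleGraph V := fromEdgeSet T.edges

theorem graph_series (l r : SPTree V) : (series l r).graph = l.graph ⊔ r.graph := by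
  simp only [graph, edges, fromEdgeSet_union]

theorem graph_parallel (l r : SPTree V) : (parallel l r).graph = l.graph ⊔ r.graph := by
  simp only [graph, edges, fromEdgeSet_union]

/-- The vertices of `T` other than its two terminals. -/
def interior (T : SPTree V) : Set V := T.verts \ {T.src, T.tgt}

theorem src_mem_verts (T : SPTree V) : T.src ∈ T.verts := by
  induction T with
  | edge => exact Or.inl rfl
  | series _ _ hl _ | parallel _ _ hl _ => exact Or.inl hl

theorem tgt_mem_verts (T : SPTree V) : T.tgt ∈ T.verts := by
  induction T with
  | edge => exact Or.inr rfl
  | series _ _ _ hr => exact Or.inr hr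
  | parallel _ _ hl _ => exact Or.inl hl

theorem mem_verts_of_adj (h : T.graph.Adj x y) : x ∈ T.verts := by
  induction T with
  | edge u v =>
    obtain ⟨he, -⟩ := (fromEdgeSet_adj _).1 h
    rcases Sym2.eq_iff.1 he with ⟨rfl, -⟩ | ⟨rfl, -⟩
    exacts [Or.inl rfl, Or.inr rfl]
  | series l r hl hr =>
    rw [graph_series] at h
    exact h.imp hl hr
  | parallel l r hl hr =>
    rw [graph_parallel] at h
    exact h.imp hl hr

theorem WF.src_ne_tgt (h : T.WF) : T.src ≠ T.tgt := by
  induction T with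
  | edge => exact h
  | series l r hl _ =>
    obtain ⟨hwl, -, -, hlr⟩ := h
    intro heq
    have : l.src ∈ l.verts ∩ r.verts := ⟨l.src_mem_verts, heq ▸ r.tgt_mem_verts⟩
    rw [hlr] at this
    exact hl hwl this
  | parallel _ _ hl _ => exact hl h.1

theorem WF.disjoint_interior_series_left (h : (series l r).WF) : Disjoint l.interior r.verts :=
  Set.disjoint_left.2 fun _ hxl hxr => hxl.2 (Or.inr (h.2.2.2.subset ⟨hxl.1, hxr⟩))

theorem WF.disjoint_interior_series_right (h : (series l r).WF) : Disjoint r.interior l.verts :=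
  Set.disjoint_left.2 fun _ hxr hxl =>
    hxr.2 (Or.inl ((h.2.2.2.subset ⟨hxl, hxr.1⟩ : _ = _).trans h.2.2.1))

theorem WF.disjoint_interior_parallel_left (h : (parallel l r).WF) : Disjoint l.interior r.verts :=
  Set.disjoint_left.2 fun _ hxl hxr => hxl.2 (h.2.2.2.2.1.subset ⟨hxl.1, hxr⟩)

theorem WF.disjoint_interior_parallel_right (h : (parallel l r).WF) :
    Disjoint r.interior l.verts := by
  obtain ⟨-, -, hsrc, htgt, hlr, -⟩ := h
  exact Set.disjoint_left.2 fun x hxr hxl =>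
    hxr.2 (hsrc ▸ htgt ▸ hlr.subset ⟨hxl, hxr.1⟩)

theorem WF.interior_series_left_subset (h : (series l r).WF) :
    l.interior ⊆ (series l r).interior := by
  refine fun x hx => ⟨Or.inl hx.1, ?_⟩
  rintro (rfl | rfl)
  exacts [hx.2 (Or.inl rfl), Set.disjoint_left.1 h.disjoint_interior_series_left hx r.tgt_mem_verts]

theorem WF.interior_series_right_subset (h : (series l r).WF) :
    r.interior ⊆ (series l r).interior := by
  refine fun x hx => ⟨Or.inr hx.1, ?_⟩
  rintro (rfl | rfl)
  exacts [Set.disjoint_left.1 h.disjoint_interior_series_right hx l.src_mem_verts,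
    hx.2 (Or.inr rfl)]

theorem WF.interior_parallel (h : (parallel l r).WF) :
    (parallel l r).interior = l.interior ∪ r.interior := by
  simp only [interior, verts, src, tgt, Set.union_sdiff_distrib, h.2.2.1, h.2.2.2.1]

end Basic

section Pieces

/-- The number of series joins among the factors of the parallel decomposition of `T`. Their
interiors are nonempty and partition `T.interior`, so deleting the two terminals of `T` leaves at
least this many components. -/
def pieces : SPTree V → ℕ
  | edge _ _ => 0
  | series _ _ => 1
  | parallel l r => l.pieces + r.pieces

open Classical in
/-- The index, between `0` and `T.pieces - 1`, of the series factor of `T` whose interior contains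
a given vertex; the value is `T.pieces` outside `T.verts`, and irrelevant at the terminals. -/
noncomputable def pieceIndex : SPTree V → V → ℕ
  | edge _ _, _ => 0
  | series l r, x => if x ∈ l.verts ∪ r.verts then 0 else 1
  | parallel l r, x => if x ∈ l.verts then l.pieceIndex x else l.pieces + r.pieceIndex x

theorem pieceIndex_parallel_of_mem_left (hx : x ∈ l.verts) :
    (parallel l r).pieceIndex x = l.pieceIndex x :=
  if_pos hx

theorem pieceIndex_parallel_of_notMem_left (hx : x ∉ l.verts) :
    (parallel l r).pieceIndex x = l.pieces + r.pieceIndex x :=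
  if_neg hx

theorem pieceIndex_of_notMem (hx : x ∉ T.verts) : T.pieceIndex x = T.pieces := by
  induction T with
  | edge => rfl
  | series => exact if_neg hx
  | parallel l r _ hr =>
    obtain ⟨hxl, hxr⟩ := not_or.1 hx
    rw [pieceIndex_parallel_of_notMem_left hxl, hr hxr, pieces]

theorem WF.pieceIndex_eq_of_adj (h : T.WF) (hx : x ∈ T.interior) (hy : y ∈ T.interior)
    (hxy : T.graph.Adj x y) : T.pieceIndex x = T.pieceIndex y := by
  induction T with
  | edge => rfl
  | series => exact (if_pos hx.1).trans (if_pos hy.1).symm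
  | parallel l r hl hr =>
    have hdl := Set.disjoint_left.1 h.disjoint_interior_parallel_left
    have hdr := Set.disjoint_left.1 h.disjoint_interior_parallel_right
    rw [h.interior_parallel] at hx hy
    rw [graph_parallel] at hxy
    rcases hxy with hxy | hxy
    · have hxl := hx.resolve_right fun hx => hdr hx (mem_verts_of_adj hxy)
      have hyl := hy.resolve_right fun hy => hdr hy (mem_verts_of_adj hxy.symm)
      rw [pieceIndex_parallel_of_mem_left hxl.1, pieceIndex_parallel_of_mem_left hyl.1,
        hl h.1 hxl hyl hxy]
    · have hxr := hx.resolve_left fun hx => hdl hx (mem_verts_of_adj hxy)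
      have hyr := hy.resolve_left fun hy => hdl hy (mem_verts_of_adj hxy.symm)
      rw [pieceIndex_parallel_of_notMem_left (hdr hxr),
        pieceIndex_parallel_of_notMem_left (hdr hyr), hr h.2.1 hxr hyr hxy]

theorem WF.Iio_pieces_subset_image_interior (h : T.WF) :
    Set.Iio T.pieces ⊆ T.pieceIndex '' T.interior := by
  intro i hi
  induction T generalizing i with
  | edge => exact absurd hi (Nat.not_lt_zero i)
  | series l r =>
    obtain rfl : 0 = i := (Nat.lt_one_iff.1 hi).symm
    refine ⟨l.tgt, ⟨Or.inl l.tgt_mem_verts, ?_⟩, if_pos (Or.inl l.tgt_mem_verts)⟩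
    rintro (heq | heq)
    exacts [h.1.src_ne_tgt heq.symm, h.2.1.src_ne_tgt (h.2.2.1.symm.trans heq)]
  | parallel l r hl hr =>
    rw [h.interior_parallel]
    by_cases hil : i < l.pieces
    · obtain ⟨x, hx, rfl⟩ := hl h.1 hil
      exact ⟨x, Or.inl hx, pieceIndex_parallel_of_mem_left hx.1⟩
    · obtain ⟨j, rfl⟩ := Nat.exists_eq_add_of_le (not_lt.1 hil)
      obtain ⟨x, hx, rfl⟩ := hr h.2.1 (Nat.add_lt_add_iff_left.1 hi)
      exact ⟨x, Or.inr hx, pieceIndex_parallel_of_notMem_left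
        (Set.disjoint_left.1 h.disjoint_interior_parallel_right hx)⟩

theorem WF.Iio_pieces_subset_image_compl (h : T.WF) :
    Set.Iio T.pieces ⊆ T.pieceIndex '' {T.src, T.tgt}ᶜ :=
  h.Iio_pieces_subset_image_interior.trans (Set.image_mono fun _ hx => hx.2)

theorem WF.eq_edge_of_pieces_eq_zero (h : T.WF) (h0 : T.pieces = 0) : T = edge T.src T.tgt := by
  induction T with
  | edge => rfl
  | series => exact absurd h0 one_ne_zero
  | parallel l r hl hr =>
    obtain ⟨hl0, hr0⟩ := Nat.add_eq_zero_iff.1 h0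
    obtain ⟨hwl, hwr, hsrc, htgt, -, hdisj⟩ := h
    rw [hl hwl hl0, hr hwr hr0, ← hsrc, ← htgt] at hdisj
    exact absurd hdisj (Set.not_disjoint_iff.2 ⟨_, rfl, rfl⟩)

theorem WF.verts_eq_of_pieces_eq_zero (h : T.WF) (h0 : T.pieces = 0) :
    T.verts = {T.src, T.tgt} :=
  congrArg verts (h.eq_edge_of_pieces_eq_zero h0)

theorem WF.verts_parallel_of_pieces_left_eq_zero (h : (parallel l r).WF) (h0 : l.pieces = 0) :
    (parallel l r).verts = r.verts := by
  refine Set.union_eq_right.2 ?_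
  rw [h.1.verts_eq_of_pieces_eq_zero h0, h.2.2.1, h.2.2.2.1]
  exact Set.pair_subset r.src_mem_verts r.tgt_mem_verts

theorem WF.verts_parallel_of_pieces_right_eq_zero (h : (parallel l r).WF) (h0 : r.pieces = 0) :
    (parallel l r).verts = l.verts := by
  refine Set.union_eq_left.2 ?_
  rw [h.2.1.verts_eq_of_pieces_eq_zero h0, ← h.2.2.1, ← h.2.2.2.1]
  exact Set.pair_subset l.src_mem_verts l.tgt_mem_verts

theorem exists_eq_parallel_of_one_lt_pieces (h : 1 < T.pieces) : ∃ l r, T = parallel l r := by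
  cases T with
  | edge => exact absurd h zero_le_one.not_gt
  | series => exact absurd h (lt_irrefl 1)
  | parallel l r => exact ⟨l, r, rfl⟩

end Pieces

section Encloses

/-- Every edge of `G` at an interior vertex of `T` is an edge of `T`, so that the terminals of `T`
separate its interior from the rest of `G`. -/
def Encloses (T : SPTree V) (G : SimpleGraph V) : Prop :=
  ∀ x y, x ∈ T.interior → G.Adj x y → T.graph.Adj x y

theorem Encloses.of_le_sup (hT : T.Encloses G) (hle : T.graph ≤ l.graph ⊔ r.graph)
    (hint : l.interior ⊆ T.interior) (hdisj : Disjoint l.interior r.verts) : l.Encloses G :=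
  fun x y hx hxy => (hle (hT x y (hint hx) hxy)).resolve_right fun hr =>
    Set.disjoint_left.1 hdisj hx (mem_verts_of_adj hr)

theorem Encloses.series_left (hT : (series l r).Encloses G) (h : (series l r).WF) :
    l.Encloses G :=
  hT.of_le_sup (graph_series l r).le h.interior_series_left_subset h.disjoint_interior_series_left

theorem Encloses.series_right (hT : (series l r).Encloses G) (h : (series l r).WF) :
    r.Encloses G :=
  hT.of_le_sup ((graph_series l r).trans (sup_comm ..)).le h.interior_series_right_subset
    h.disjoint_interior_series_right

theorem Encloses.parallel_left (hT : (parallel l r).Encloses G) (h : (parallel l r).WF) :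
    l.Encloses G :=
  hT.of_le_sup (graph_parallel l r).le (h.interior_parallel ▸ Set.subset_union_left)
    h.disjoint_interior_parallel_left

theorem Encloses.parallel_right (hT : (parallel l r).Encloses G) (h : (parallel l r).WF) :
    r.Encloses G :=
  hT.of_le_sup ((graph_parallel l r).trans (sup_comm ..)).le
    (h.interior_parallel ▸ Set.subset_union_right) h.disjoint_interior_parallel_right

theorem Encloses.pieceIndex_eq_of_adj (hT : T.Encloses G) (h : T.WF)
    (hx : x ∉ ({T.src, T.tgt} : Set V)) (hy : y ∉ ({T.src, T.tgt} : Set V)) (hxy : G.Adj x y) :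
    T.pieceIndex x = T.pieceIndex y := by
  by_cases hxT : x ∈ T.verts
  · have hxyT := hT x y ⟨hxT, hx⟩ hxy
    exact h.pieceIndex_eq_of_adj ⟨hxT, hx⟩ ⟨mem_verts_of_adj hxyT.symm, hy⟩ hxyT
  · have hyT : y ∉ T.verts := fun hyT => hxT (mem_verts_of_adj (hT y x ⟨hyT, hy⟩ hxy.symm).symm)
    rw [pieceIndex_of_notMem hxT, pieceIndex_of_notMem hyT]

variable [Finite V]

theorem Encloses.ncard_image_pieceIndex_le_two (hT : T.Encloses G) (h : T.WF)
    (hG : 1 ≤ toughness G) : (T.pieceIndex '' {T.src, T.tgt}ᶜ).ncard ≤ 2 :=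
  calc (T.pieceIndex '' {T.src, T.tgt}ᶜ).ncard ≤ numComp G {T.src, T.tgt} :=
        ncard_image_compl_le_numComp _ fun _ hx _ hy => hT.pieceIndex_eq_of_adj h hx hy
    _ ≤ max 1 ({T.src, T.tgt} : Set V).ncard := numComp_le_max_one_ncard hG _
    _ = 2 := by rw [Set.ncard_pair h.src_ne_tgt, max_eq_right one_le_two]

theorem Encloses.pieces_le_two (hT : T.Encloses G) (h : T.WF) (hG : 1 ≤ toughness G) :
    T.pieces ≤ 2 :=
  calc T.pieces = (Set.Iio T.pieces).ncard := (Set.ncard_Iio_nat _).symm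
    _ ≤ (T.pieceIndex '' {T.src, T.tgt}ᶜ).ncard :=
        Set.ncard_le_ncard h.Iio_pieces_subset_image_compl
    _ ≤ 2 := hT.ncard_image_pieceIndex_le_two h hG

theorem Encloses.pieces_le_one (hT : T.Encloses G) (h : T.WF) (hG : 1 ≤ toughness G)
    (hx : x ∉ T.verts) : T.pieces ≤ 1 := by
  have hsub : Set.Iic T.pieces ⊆ T.pieceIndex '' {T.src, T.tgt}ᶜ := by
    rw [← Set.Iio_insert, Set.insert_subset_iff]
    refine ⟨⟨x, ?_, pieceIndex_of_notMem hx⟩, h.Iio_pieces_subset_image_compl⟩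
    rintro (rfl | rfl)
    exacts [hx T.src_mem_verts, hx T.tgt_mem_verts]
  refine Nat.le_of_succ_le_succ ?_
  calc T.pieces + 1 = (Set.Iic T.pieces).ncard := (Set.ncard_Iic_nat _).symm
    _ ≤ (T.pieceIndex '' {T.src, T.tgt}ᶜ).ncard := Set.ncard_le_ncard hsub
    _ ≤ 2 := hT.ncard_image_pieceIndex_le_two h hG

end Encloses

section Spanning

/-- `T` has a path from source to sink through exactly the vertices of `T`. -/
def HasSpanningPath (T : SPTree V) : Prop :=
  ∃ p : T.graph.Walk T.src T.tgt, p.IsPath ∧ ∀ x, x ∈ p.support ↔ x ∈ T.verts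

/-- `T` has a cycle through exactly the vertices of `T`. -/
def HasSpanningCycle (T : SPTree V) : Prop :=
  ∃ a, ∃ c : T.graph.Walk a a, c.IsCycle ∧ ∀ x, x ∈ c.support ↔ x ∈ T.verts

theorem HasSpanningPath.exists_isPath_of_le {u v : V} (hT : T.HasSpanningPath)
    (hle : T.graph ≤ G) (hu : T.src = u) (hv : T.tgt = v) :
    ∃ p : G.Walk u v, p.IsPath ∧ (∀ x, x ∈ p.support ↔ x ∈ T.verts) ∧
      ∀ e ∈ p.edges, e ∈ T.edges := by
  subst hu hv
  obtain ⟨p, hp, hspan⟩ := hT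
  refine ⟨p.mapLe hle, hp.mapLe hle, ?_, fun e he => ?_⟩
  · rwa [Walk.support_mapLe_eq_support]
  · rw [Walk.edges_mapLe_eq_edges] at he
    have := p.edges_subset_edgeSet he
    rw [graph, edgeSet_fromEdgeSet] at this
    exact this.1

theorem HasSpanningPath.mono (hl : l.HasSpanningPath) (hle : l.graph ≤ T.graph)
    (hsrc : l.src = T.src) (htgt : l.tgt = T.tgt) (hverts : T.verts = l.verts) :
    T.HasSpanningPath := by
  obtain ⟨p, hp, hspan, -⟩ := hl.exists_isPath_of_le hle hsrc htgt
  exact ⟨p, hp, hverts ▸ hspan⟩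

theorem HasSpanningCycle.mono (hl : l.HasSpanningCycle) (hle : l.graph ≤ T.graph)
    (hverts : T.verts = l.verts) : T.HasSpanningCycle := by
  obtain ⟨a, c, hc, hspan⟩ := hl
  refine ⟨a, c.mapLe hle, hc.mapLe hle, ?_⟩
  rwa [Walk.support_mapLe_eq_support, hverts]

theorem WF.hasSpanningPath_edge {u v : V} (h : (edge u v).WF) : (edge u v).HasSpanningPath := by
  have huv : (edge u v).graph.Adj u v := (fromEdgeSet_adj _).2 ⟨rfl, h⟩
  exact ⟨huv.toWalk, Walk.IsPath.of_adj huv, fun _ => List.mem_pair⟩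

theorem HasSpanningPath.series (hl : l.HasSpanningPath) (hr : r.HasSpanningPath)
    (h : (series l r).WF) : (series l r).HasSpanningPath := by
  obtain ⟨p, hp, hpl, -⟩ :=
    hl.exists_isPath_of_le (le_sup_left.trans (graph_series l r).ge) rfl rfl
  obtain ⟨q, hq, hqr, -⟩ :=
    hr.exists_isPath_of_le (le_sup_right.trans (graph_series l r).ge) h.2.2.1.symm rfl
  refine ⟨p.append q, isPath_append hp hq fun x hxp hxq => ?_, fun x => ?_⟩
  · exact h.2.2.2.subset ⟨(hpl x).1 hxp, (hqr x).1 hxq⟩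
  · exact (p.mem_support_append_iff q).trans (or_congr (hpl x) (hqr x))

theorem HasSpanningPath.parallel (hl : l.HasSpanningPath) (hr : r.HasSpanningPath)
    (h : (parallel l r).WF) : (parallel l r).HasSpanningCycle := by
  obtain ⟨hwl, -, hsrc, htgt, hinter, hdisj⟩ := h
  obtain ⟨p, hp, hpl, hpe⟩ :=
    hl.exists_isPath_of_le (le_sup_left.trans (graph_parallel l r).ge) rfl rfl
  obtain ⟨q, hq, hqr, hqe⟩ :=
    hr.exists_isPath_of_le (le_sup_right.trans (graph_parallel l r).ge) hsrc.symm htgt.symm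
  have hpq : p ≠ q := by
    rintro rfl
    obtain ⟨e, he⟩ := List.exists_mem_of_ne_nil p.edges
      (mt Walk.edges_eq_nil.1 (Walk.not_nil_of_ne hwl.src_ne_tgt))
    exact Set.disjoint_left.1 hdisj (hpe e he) (hqe e he)
  refine ⟨_, p.append q.reverse, isCycle_append_reverse hp hq hpq fun x hxp hxq => ?_, fun x => ?_⟩
  · exact hinter.subset ⟨(hpl x).1 hxp, (hqr x).1 hxq⟩
  · rw [Walk.mem_support_append_iff, Walk.support_reverse, List.mem_reverse, hpl, hqr]
    rfl

theorem HasSpanningCycle.isHamiltonian [Fintype V] [DecidableEq V] (hT : T.HasSpanningCycle)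
    (hverts : T.verts = Set.univ) : T.graph.IsHamiltonian := by
  obtain ⟨a, c, hc, hspan⟩ := hT
  refine fun _ => ⟨a, c, Walk.isHamiltonianCycle_isCycle_and_isHamiltonian_tail.2
    ⟨hc, hc.isPath_tail.isHamiltonian_of_mem fun x => ?_⟩⟩
  rw [Walk.support_tail_of_not_nil _ hc.not_nil]
  have hx : x ∈ c.support := (hspan x).2 (hverts ▸ Set.mem_univ x)
  rw [← c.cons_tail_support, List.mem_cons] at hx
  rcases hx with rfl | hx
  exacts [Walk.end_mem_tail_support hc.not_nil, hx]

end Spanning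

section Tough

variable [Finite V]

theorem Encloses.hasSpanningPath (hT : T.Encloses G) (h : T.WF) (hG : 1 ≤ toughness G)
    (hp : T.pieces ≤ 1) : T.HasSpanningPath := by
  induction T with
  | edge => exact h.hasSpanningPath_edge
  | series l r hl hr =>
    have hTl := hT.series_left h
    have hTr := hT.series_right h
    obtain ⟨hwl, hwr, hlr, hinter⟩ := id h
    have htgt : r.tgt ∉ l.verts := fun hmem =>
      hwr.src_ne_tgt (hlr.symm.trans (hinter.subset ⟨hmem, r.tgt_mem_verts⟩).symm)
    have hsrc : l.src ∉ r.verts := fun hmem =>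
      hwl.src_ne_tgt (hinter.subset ⟨l.src_mem_verts, hmem⟩)
    exact (hl hTl hwl (hTl.pieces_le_one hwl hG htgt)).series
      (hr hTr hwr (hTr.pieces_le_one hwr hG hsrc)) h
  | parallel l r hl hr =>
    have h0 : l.pieces = 0 ∧ r.pieces ≤ 1 ∨ r.pieces = 0 ∧ l.pieces ≤ 1 := by
      rw [pieces] at hp
      lia
    rcases h0 with ⟨h0, hp⟩ | ⟨h0, hp⟩
    · exact (hr (hT.parallel_right h) h.2.1 hp).mono (le_sup_right.trans (graph_parallel l r).ge)
        h.2.2.1.symm h.2.2.2.1.symm (h.verts_parallel_of_pieces_left_eq_zero h0)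
    · exact (hl (hT.parallel_left h) h.1 hp).mono (le_sup_left.trans (graph_parallel l r).ge)
        rfl rfl (h.verts_parallel_of_pieces_right_eq_zero h0)

theorem Encloses.hasSpanningCycle (hT : T.Encloses G) (h : T.WF) (hG : 1 ≤ toughness G)
    (hpar : ∃ l r, T = parallel l r) : T.HasSpanningCycle := by
  induction T with
  | edge | series => simp only [reduceCtorEq, exists_false] at hpar
  | parallel l r hl hr =>
    have hTl := hT.parallel_left h
    have hTr := hT.parallel_right h
    have hp : l.pieces + r.pieces ≤ 2 := hT.pieces_le_two h hG
    by_cases hpl : 1 < l.pieces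
    · exact (hl hTl h.1 (exists_eq_parallel_of_one_lt_pieces hpl)).mono
        (le_sup_left.trans (graph_parallel l r).ge)
        (h.verts_parallel_of_pieces_right_eq_zero (by lia))
    by_cases hpr : 1 < r.pieces
    · exact (hr hTr h.2.1 (exists_eq_parallel_of_one_lt_pieces hpr)).mono
        (le_sup_right.trans (graph_parallel l r).ge)
        (h.verts_parallel_of_pieces_left_eq_zero (by lia))
    exact (hTl.hasSpanningPath h.1 hG (not_lt.1 hpl)).parallel
      (hTr.hasSpanningPath h.2.1 hG (not_lt.1 hpr)) h

theorem WF.isCutVertex_series (h : (series l r).WF) : IsCutVertex (series l r).graph l.tgt := by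
  obtain ⟨hwl, hwr, hlr, hinter⟩ := h
  have hsrc : l.src ∉ ({l.tgt} : Set V) := hwl.src_ne_tgt
  have htgt : r.tgt ∉ ({l.tgt} : Set V) := hlr ▸ hwr.src_ne_tgt.symm
  have htgtl : r.tgt ∉ l.verts := fun hmem => htgt (hinter.subset ⟨hmem, r.tgt_mem_verts⟩)
  have hside (x) (hx : x ∉ ({l.tgt} : Set V)) (y) (hy : y ∉ ({l.tgt} : Set V))
      (hxy : (series l r).graph.Adj x y) : (x ∈ l.verts) = (y ∈ l.verts) := by
    rw [graph_series] at hxy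
    rcases hxy with hxy | hxy
    · exact propext (iff_of_true (mem_verts_of_adj hxy) (mem_verts_of_adj hxy.symm))
    · exact propext (iff_of_false (fun hxl => hx (hinter.subset ⟨hxl, mem_verts_of_adj hxy⟩))
        fun hyl => hy (hinter.subset ⟨hyl, mem_verts_of_adj hxy.symm⟩))
  refine lt_of_lt_of_le ?_ (ncard_image_compl_le_numComp (· ∈ l.verts) hside)
  exact (Set.one_lt_ncard_iff (Set.toFinite _)).2 ⟨_, _, ⟨_, hsrc, rfl⟩, ⟨_, htgt, rfl⟩,
    fun heq => htgtl (heq.mp l.src_mem_verts)⟩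

theorem WF.exists_eq_parallel_of_one_le_toughness (h : T.WF) (hverts : T.verts = Set.univ)
    (hG : 1 ≤ toughness T.graph) : ∃ l r, T = parallel l r := by
  obtain ⟨hne, hcut⟩ := one_le_toughness_iff.1 hG
  cases T with
  | edge u v =>
    refine absurd (eq_top_iff.2 fun x y hxy => (fromEdgeSet_adj _).2 ⟨?_, hxy⟩) hne
    have hmem (z : V) : z = u ∨ z = v := hverts.ge (Set.mem_univ z)
    rcases hmem x with rfl | rfl <;> rcases hmem y with rfl | rfl
    exacts [absurd rfl hxy, rfl, Sym2.eq_swap, absurd rfl hxy]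
  | series l r =>
    refine absurd (hcut _ h.isCutVertex_series) (not_le.2 ?_)
    rw [Set.ncard_singleton]
    exact h.isCutVertex_series
  | parallel l r => exact ⟨l, r, rfl⟩

end Tough

end SPTree

theorem IsSPGraph.isHamiltonian_of_one_le_toughness {V : Type*} [Fintype V] [DecidableEq V]
    {G : SimpleGraph V} (hsp : IsSPGraph G) (hG : 1 ≤ toughness G) : G.IsHamiltonian := by
  obtain ⟨T, h, hverts, rfl⟩ := hsp
  have hpar := h.exists_eq_parallel_of_one_le_toughness hverts hG
  have hencl : T.Encloses T.graph := fun _ _ _ hxy => hxy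
  exact (hencl.hasSpanningCycle h hG hpar).isHamiltonian hverts

/-- Every minimally 1-tough series-parallel graph is a cycle. -/
theorem minTough_one_sp_is_cycle {V : Type*} [Fintype V]
    (G : SimpleGraph V) (hsp : IsSPGraph G) (h : MinTough G 1) :
    ∃ n : ℕ, 3 ≤ n ∧ Nonempty (G ≃g SimpleGraph.cycleGraph n) := by
  classical
  exact h.exists_iso_cycleGraph (hsp.isHamiltonian_of_one_le_toughness h.1.ge)
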